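/- Builder has a strategy in the online Ramsey game with target graphs C₄ (red) and P₆ (blue) that guarantees, against every Painter strategy, that after at most 11 rounds the colored edges contain a red copy of C₄ or a blue copy of P₆; in particular ř(C₄,P₆) ≤ 11. -/

import Mathlib

open SimpleGraph

/-- The set `S` of edges of the infinite complete graph on `ℕ` contains a copy of
the graph `G`: there is an injective map of the vertices of `G` into `ℕ` sending
every edge of `G` into `S`. -/
def HasCopy {V : Type*} (G : SimpleGraph V) (S : Set (Sym2 ℕ)) : Prop :=
  ∃ f : V → ℕ, Function.Injective f ∧ ∀ a b, G.Adj a b → s(f a, f b) ∈ S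

/-- `BuilderWinsIn G H R B r` means: in the online Ramsey game with targets a red copy
of `G` and a blue copy of `H`, from the position in which the edges in `R` have been
colored red and the edges in `B` have been colored blue, Builder has a strategy that
guarantees, against every Painter strategy, that within at most `r` further rounds the
colored edges contain a red copy of `G` or a blue copy of `H`.  (In each round Builder
chooses a previously unchosen non-loop edge of the infinite complete graph on `ℕ`, and
Painter immediately colors it red or blue; so Builder wins within `r + 1` rounds iff he
has already won, or he can choose an edge such that whichever color Painter gives it,
he can win within `r` further rounds.) -/
def BuilderWinsIn {V W : Type*} (G : SimpleGraph V) (H : SimpleGraph W) :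
    Set (Sym2 ℕ) → Set (Sym2 ℕ) → ℕ → Prop
  | R, B, 0 => HasCopy G R ∨ HasCopy H B
  | R, B, (r + 1) => HasCopy G R ∨ HasCopy H B ∨
      ∃ e : Sym2 ℕ, ¬ e.IsDiag ∧ e ∉ R ∧ e ∉ B ∧
        BuilderWinsIn G H (insert e R) B r ∧ BuilderWinsIn G H R (insert e B) r

/-- The online size Ramsey number `ř(G, H)`: the least `t` such that, starting from the
empty position, Builder can force a red copy of `G` or a blue copy of `H` within at
most `t` rounds. -/
noncomputable def onlineRamsey {V W : Type*} (G : SimpleGraph V) (H : SimpleGraph W) : ℕ :=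
  sInf {t | BuilderWinsIn G H ∅ ∅ t}

/-!
A position is at least as good for Builder as any position that embeds into it, so the analysis
needs only a few positions, mostly paths with prescribed edge colors, which Builder keeps extending.
He profits from forced moves: an edge completing a red `C₄` must become blue, and one completing a
blue `P₆` must become red. Two disjoint blue paths, each with at least one edge and with six
vertices in total, thus force the edges joining an end of one to an end of the other to be red, and
these four edges form a `C₄`. A long red path forces its chords closing a `C₄` to be blue, and these
chords combine to long blue paths.
-/

section

variable {V W : Type*} {G : SimpleGraph V} {H : SimpleGraph W}

theorem HasCopy.mono {S T : Set (Sym2 ℕ)} (h : HasCopy G S) (hST : S ⊆ T) : HasCopy G T :=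
  let ⟨f, hf, hS⟩ := h
  ⟨f, hf, fun a b hab ↦ hST (hS a b hab)⟩

namespace BuilderWinsIn

variable {R B R' B' : Set (Sym2 ℕ)} {r r' : ℕ}

theorem of_hasCopy (h : HasCopy G R ∨ HasCopy H B) : BuilderWinsIn G H R B r := by
  cases r with
  | zero => exact h
  | succ r => exact h.imp_right .inl

theorem succ (h : BuilderWinsIn G H R B r) : BuilderWinsIn G H R B (r + 1) := by
  induction r generalizing R B with
  | zero => exact of_hasCopy h
  | succ r ih =>
    obtain hG | hH | ⟨e, he, heR, heB, hred, hblue⟩ := h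
    · exact of_hasCopy (.inl hG)
    · exact of_hasCopy (.inr hH)
    · exact .inr (.inr ⟨e, he, heR, heB, ih hred, ih hblue⟩)

-- Choosing an already colored edge would only waste a round, so `e` need not be fresh.
theorem play {e : Sym2 ℕ} (he : ¬ e.IsDiag) (hred : BuilderWinsIn G H (insert e R) B r)
    (hblue : BuilderWinsIn G H R (insert e B) r) : BuilderWinsIn G H R B (r + 1) := by
  by_cases hR : e ∈ R
  · exact (Set.insert_eq_of_mem hR ▸ hred).succ
  by_cases hB : e ∈ B
  · exact (Set.insert_eq_of_mem hB ▸ hblue).succ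
  exact .inr (.inr ⟨e, he, hR, hB, hred, hblue⟩)

theorem mono (h : BuilderWinsIn G H R B r) (hR : R ⊆ R') (hB : B ⊆ B') (hr : r ≤ r') :
    BuilderWinsIn G H R' B' r' := by
  induction r generalizing R B R' B' r' with
  | zero => exact of_hasCopy (h.imp (·.mono hR) (·.mono hB))
  | succ r ih =>
    obtain hG | hH | ⟨e, he, -, -, hred, hblue⟩ := h
    · exact of_hasCopy (.inl (hG.mono hR))
    · exact of_hasCopy (.inr (hH.mono hB))
    · cases r' with
      | zero => exact absurd hr (Nat.not_succ_le_zero r)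
      | succ r' =>
        have hr : r ≤ r' := Nat.le_of_succ_le_succ hr
        exact play he (ih hred (Set.insert_subset_insert hR) hB hr)
          (ih hblue hR (Set.insert_subset_insert hB) hr)

end BuilderWinsIn

/-- `f` is a copy of `G` inside the finite edge set `S`: the analogue of `HasCopy` with an
explicit witness over an arbitrary vertex type, which makes it decidable. -/
def IsCopy {U : Type*} (G : SimpleGraph V) (S : Finset (Sym2 U)) (f : V → U) : Prop :=
  Function.Injective f ∧ ∀ a b, G.Adj a b → s(f a, f b) ∈ S

instance {U : Type*} [DecidableEq U] [Fintype V] [DecidableEq V] [DecidableRel G.Adj]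
    {S : Finset (Sym2 U)} {f : V → U} : Decidable (IsCopy G S f) :=
  inferInstanceAs (Decidable (_ ∧ _))

instance {n : ℕ} : DecidableRel (pathGraph n).Adj :=
  fun _ _ ↦ decidable_of_iff _ pathGraph_adj.symm

theorem IsCopy.hasCopy {U : Type*} {S : Finset (Sym2 U)} {g : V → U} (h : IsCopy G S g)
    (f : U ↪ ℕ) : HasCopy G (Sym2.map f '' S) :=
  ⟨f ∘ g, f.injective.comp h.1, fun a b hab ↦ ⟨s(g a, g b), h.2 a b hab, Sym2.map_mk ..⟩⟩

/-- Builder wins within `r` rounds from the position with red edges `R` and blue edges `B`, for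
every placement of the vertices `U` of that position in `ℕ`. Quantifying over placements turns a
position into an isomorphism type, so that wins can be transported along embeddings of positions. -/
def BuilderWinsFrom {U : Type*} (G : SimpleGraph V) (H : SimpleGraph W) (R B : Finset (Sym2 U))
    (r : ℕ) : Prop :=
  ∀ f : U ↪ ℕ, BuilderWinsIn G H (Sym2.map f '' R) (Sym2.map f '' B) r

namespace BuilderWinsFrom

variable {U U' : Type*} {R B : Finset (Sym2 U)} {R' B' : Finset (Sym2 U')}
  {r r' : ℕ}

theorem of_red_copy (g : V → U) (hg : IsCopy G R g := by decide) : BuilderWinsFrom G H R B r :=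
  fun f ↦ .of_hasCopy (.inl (hg.hasCopy f))

theorem of_blue_copy (g : W → U) (hg : IsCopy H B g := by decide) : BuilderWinsFrom G H R B r :=
  fun f ↦ .of_hasCopy (.inr (hg.hasCopy f))

theorem embed [DecidableEq U'] (h : BuilderWinsFrom G H R B r) (f : U → U')
    (hf : Function.Injective f := by decide)
    (hR : R.image (Sym2.map f) ⊆ R' := by decide) (hB : B.image (Sym2.map f) ⊆ B' := by decide)
    (hr : r ≤ r' := by decide) : BuilderWinsFrom G H R' B' r' := by
  have image_subset {S : Finset (Sym2 U)} {S' : Finset (Sym2 U')} (hS : S.image (Sym2.map f) ⊆ S')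
      (f' : U' ↪ ℕ) : Sym2.map (f' ∘ f) '' S ⊆ Sym2.map f' '' S' := by
    rw [Sym2.map_comp, Set.image_comp, ← Finset.coe_image]
    exact Set.image_mono hS
  exact fun f' ↦ (h (.trans ⟨f, hf⟩ f')).mono (image_subset hR f') (image_subset hB f') hr

variable [DecidableEq U]

theorem play (u v : U) (hred : BuilderWinsFrom G H (insert s(u, v) R) B r)
    (hblue : BuilderWinsFrom G H R (insert s(u, v) B) r) (huv : u ≠ v := by decide) :
    BuilderWinsFrom G H R B (r + 1) := fun f ↦ by
  have hred := hred f
  have hblue := hblue f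
  rw [Finset.coe_insert, Set.image_insert_eq] at hred hblue
  exact .play (by simpa using huv) hred hblue

theorem force_red (u v : U) (g : W → U) (h : BuilderWinsFrom G H (insert s(u, v) R) B r)
    (hg : IsCopy H (insert s(u, v) B) g := by decide) (huv : u ≠ v := by decide) :
    BuilderWinsFrom G H R B (r + 1) :=
  play u v h (of_blue_copy g hg) huv

theorem force_blue (u v : U) (g : V → U) (h : BuilderWinsFrom G H R (insert s(u, v) B) r)
    (hg : IsCopy G (insert s(u, v) R) g := by decide) (huv : u ≠ v := by decide) :
    BuilderWinsFrom G H R B (r + 1) :=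
  play u v (of_red_copy g hg) h huv

end BuilderWinsFrom

end

/-- Builder forces a red `C₄` or a blue `P₆` within `r` rounds from the position with red edges `R`
and blue edges `B`. Seven vertices are enough for the whole strategy. -/
abbrev WinsC4P6 (R B : Finset (Sym2 (Fin 7))) (r : ℕ) : Prop :=
  BuilderWinsFrom (cycleGraph 4) (pathGraph 6) R B r

namespace WinsC4P6

-- A word in `r` and `b` in a name lists the edge colors of a path in order.

theorem path_rrrrr : WinsC4P6 {s(0, 1), s(1, 2), s(2, 3), s(3, 4), s(4, 5)} ∅ 6 :=
  .force_blue 0 3 ![0, 1, 2, 3] <|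
  .force_blue 2 5 ![2, 3, 4, 5] <|
  .force_blue 1 4 ![1, 2, 3, 4] <|
  .play 0 4
    (.force_blue 1 3 ![0, 1, 3, 4] <|
     .force_blue 2 4 ![0, 1, 2, 4] <|
     .of_blue_copy ![0, 3, 1, 4, 2, 5])
    (.force_red 3 5 ![1, 4, 0, 3, 5, 2] <|
     .force_red 1 5 ![2, 5, 1, 4, 0, 3] <|
     .of_red_copy ![1, 2, 3, 5])

theorem path_rrbb_pendant_b : WinsC4P6 {s(0, 1), s(1, 2)} {s(1, 5), s(2, 3), s(3, 4)} 4 :=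
  .play 0 5
    (.play 5 6
       (.force_blue 2 5 ![0, 1, 2, 5] <|
        .force_blue 1 6 ![0, 1, 6, 5] <|
        .of_blue_copy ![4, 3, 2, 5, 1, 6])
       (.play 0 6
          (.force_red 2 6 ![1, 5, 6, 2, 3, 4] <|
           .of_red_copy ![0, 1, 2, 6])
          (.force_red 2 5 ![0, 6, 5, 2, 3, 4] <|
           .of_red_copy ![0, 1, 2, 5])))
    (.force_red 0 2 ![1, 5, 0, 2, 3, 4] <|
     .force_red 1 4 ![0, 5, 1, 4, 3, 2] <|
     .force_red 0 4 ![1, 5, 0, 4, 3, 2] <|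
     .of_red_copy ![0, 2, 1, 4])

theorem path_rrrbb : WinsC4P6 {s(0, 1), s(1, 2), s(2, 3)} {s(3, 4), s(4, 5)} 5 :=
  .play 2 6
    (.force_blue 0 3 ![0, 1, 2, 3] <|
     .play 0 2
       (.force_blue 1 6 ![0, 1, 6, 2] <|
        .force_blue 0 6 ![0, 1, 2, 6] <|
        .of_blue_copy ![1, 6, 0, 3, 4, 5])
       (.force_red 5 6 ![2, 0, 3, 4, 5, 6] <|
        .force_red 1 5 ![1, 5, 4, 3, 0, 2] <|
        .of_red_copy ![1, 2, 6, 5]))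
    (.embed path_rrbb_pendant_b ![1, 2, 3, 4, 5, 6, 0])

theorem path_rrrrb : WinsC4P6 {s(0, 1), s(1, 2), s(2, 3), s(3, 4)} {s(4, 5)} 6 :=
  .play 0 4
    (.force_blue 1 3 ![0, 1, 3, 4] <|
     .force_blue 0 3 ![0, 1, 2, 3] <|
     .force_blue 0 2 ![0, 2, 3, 4] <|
     .force_blue 2 4 ![0, 1, 2, 4] <|
     .of_blue_copy ![1, 3, 0, 2, 4, 5])
    (.embed path_rrrbb ![3, 2, 1, 0, 4, 5, 6])

theorem path_rrrr : WinsC4P6 {s(0, 1), s(1, 2), s(2, 3), s(3, 4)} ∅ 7 :=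
  .play 4 5
    (.embed path_rrrrr id)
    (.embed path_rrrrb id)

theorem path_bb_disjoint_path_rb : WinsC4P6 {s(3, 4)} {s(0, 1), s(1, 2), s(4, 5)} 5 :=
  .play 0 4
    (.embed path_rrbb_pendant_b ![3, 4, 0, 1, 2, 5, 6])
    (.force_red 2 3 ![3, 2, 1, 0, 4, 5] <|
     .force_red 3 5 ![2, 1, 0, 4, 5, 3] <|
     .force_red 5 6 ![2, 1, 0, 4, 5, 6] <|
     .force_red 2 6 ![5, 4, 0, 1, 2, 6] <|
     .of_red_copy ![2, 3, 5, 6])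

theorem path_rrbb : WinsC4P6 {s(0, 1), s(1, 2)} {s(2, 3), s(3, 4)} 6 :=
  .play 0 5
    (.embed path_rrrbb ![5, 0, 1, 2, 3, 4, 6])
    (.embed path_bb_disjoint_path_rb ![4, 3, 2, 1, 0, 5, 6])

theorem path_rrrb : WinsC4P6 {s(0, 1), s(1, 2), s(2, 3)} {s(3, 4)} 7 :=
  .force_blue 0 3 ![0, 1, 2, 3] <|
  .embed path_rrbb ![2, 1, 0, 3, 4, 5, 6]

theorem path_rrr : WinsC4P6 {s(0, 1), s(1, 2), s(2, 3)} ∅ 8 :=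
  .play 3 4
    (.embed path_rrrr id)
    (.embed path_rrrb id)

theorem path_brrb : WinsC4P6 {s(1, 2), s(2, 3)} {s(0, 1), s(3, 4)} 6 :=
  .play 3 5
    (.force_blue 1 5 ![1, 2, 3, 5] <|
     .embed path_rrbb_pendant_b ![2, 3, 5, 1, 0, 4, 6])
    (.embed path_bb_disjoint_path_rb ![4, 3, 5, 2, 1, 0, 6])

theorem path_bb_disjoint_path_b : WinsC4P6 ∅ {s(0, 1), s(1, 2), s(3, 4)} 6 :=
  .play 3 5
    (.embed path_bb_disjoint_path_rb ![0, 1, 2, 5, 3, 4, 6])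
    (.force_red 0 4 ![2, 1, 0, 4, 3, 5] <|
     .force_red 2 4 ![0, 1, 2, 4, 3, 5] <|
     .force_red 2 5 ![0, 1, 2, 5, 3, 4] <|
     .force_red 0 5 ![2, 1, 0, 5, 3, 4] <|
     .of_red_copy ![0, 4, 2, 5])

theorem path_rb_disjoint_path_b : WinsC4P6 {s(0, 1)} {s(1, 2), s(3, 4)} 7 :=
  .play 0 3
    (.embed path_brrb ![2, 1, 0, 3, 4, 5, 6])
    (.embed path_bb_disjoint_path_b ![0, 3, 4, 1, 2, 5, 6])

theorem path_rrb : WinsC4P6 {s(0, 1), s(1, 2)} {s(2, 3)} 8 :=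
  .play 0 4
    (.embed path_rrrb ![4, 0, 1, 2, 3, 5, 6])
    (.embed path_rb_disjoint_path_b ![1, 0, 4, 3, 2, 5, 6])

theorem path_rr : WinsC4P6 {s(0, 1), s(1, 2)} ∅ 9 :=
  .play 0 3
    (.embed path_rrr ![2, 1, 0, 3, 4, 5, 6])
    (.embed path_rrb ![2, 1, 0, 3, 4, 5, 6])

theorem path_b_disjoint_path_b : WinsC4P6 ∅ {s(0, 1), s(2, 3)} 8 :=
  .play 2 4
    (.embed path_rb_disjoint_path_b ![4, 2, 3, 0, 1, 5, 6])
    (.embed path_bb_disjoint_path_b ![3, 2, 4, 0, 1, 5, 6])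

theorem path_rb : WinsC4P6 {s(0, 1)} {s(1, 2)} 9 :=
  .play 0 3
    (.embed path_rrb ![3, 0, 1, 2, 4, 5, 6])
    (.embed path_b_disjoint_path_b ![0, 3, 2, 1, 4, 5, 6])

theorem path_r : WinsC4P6 {s(0, 1)} ∅ 10 :=
  .play 0 2
    (.embed path_rr ![1, 0, 2, 3, 4, 5, 6])
    (.embed path_rb ![1, 0, 2, 3, 4, 5, 6])

theorem path_rbb : WinsC4P6 {s(0, 1)} {s(1, 2), s(2, 3)} 7 :=
  .play 0 4
    (.embed path_rrbb ![4, 0, 1, 2, 3, 5, 6])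
    (.embed path_bb_disjoint_path_b ![1, 2, 3, 0, 4, 5, 6])

theorem path_r_disjoint_path_b : WinsC4P6 {s(0, 1)} {s(2, 3)} 9 :=
  .play 0 2
    (.embed path_rrb ![1, 0, 2, 3, 4, 5, 6])
    (.embed path_rbb ![1, 0, 2, 3, 4, 5, 6])

theorem path_b : WinsC4P6 ∅ {s(0, 1)} 10 :=
  .play 2 3
    (.embed path_r_disjoint_path_b ![2, 3, 0, 1, 4, 5, 6])
    (.embed path_b_disjoint_path_b id)

theorem empty : WinsC4P6 ∅ ∅ 11 :=
  .play 0 1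
    (.embed path_r id)
    (.embed path_b id)

end WinsC4P6

/-- Builder has a strategy in the online Ramsey game with targets red `C₄` and blue `P₆`
that guarantees a win within at most 11 rounds against every Painter strategy; in
particular `ř(C₄, P₆) ≤ 11`. -/
theorem builder_wins_C4_P6_in_eleven :
    BuilderWinsIn (cycleGraph 4) (pathGraph 6) ∅ ∅ 11 ∧
      onlineRamsey (cycleGraph 4) (pathGraph 6) ≤ 11 := by
  have wins : BuilderWinsIn (cycleGraph 4) (pathGraph 6) ∅ ∅ 11 := by
    simpa using WinsC4P6.empty Fin.valEmbedding
  exact ⟨wins, Nat.sInf_le wins⟩
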